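/- arXiv:2403.17262 — 2 statements merged into one kernel-verified Lean document; each statement's English description precedes it below -/
import Mathlib

section
/- Let P ⊂ ℝⁿ be the convex hull of a finite subset of ℤⁿ with 0 in its interior, and suppose there exists a point x̂ ∈ P that is not an extreme point of P and at which ‖·‖_{−P} attains its maximum over P (i.e., condition (∗_P) fails). Then for every m ≥ 1 there exists k₀ such that for all k ≥ k₀ one has |P ∩ (1/k)ℤⁿ| ≥ m and max over subsets F ⊆ P ∩ (1/k)ℤⁿ with |F| = m of (min_{x ∈ conv F} ‖x‖_{−P}) = max_{x∈P} ‖x‖_{−P}. -/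
open scoped RealInnerProductSpace Pointwise

/-- A point of `ℝⁿ` all of whose coordinates are integers, i.e. a point of `ℤⁿ`. -/
def IsLatticePt {n : ℕ} (x : EuclideanSpace ℝ (Fin n)) : Prop :=
  ∀ i, ∃ m : ℤ, x i = m

/-- The gauge (near-norm) `‖x‖₋P = inf {t ≥ 0 : x ∈ t•(−P)}` of the reflected body `−P`. -/
noncomputable def gaugeNeg {n : ℕ} (P : Set (EuclideanSpace ℝ (Fin n)))
    (x : EuclideanSpace ℝ (Fin n)) : ℝ :=
  sInf {t : ℝ | 0 ≤ t ∧ x ∈ t • (-P)}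

/-- The rescaled lattice `(1/k)ℤⁿ = {u/k : u ∈ ℤⁿ}`. -/
def latticeDiv (n k : ℕ) : Set (EuclideanSpace ℝ (Fin n)) :=
  {x | ∀ i, ∃ z : ℤ, x i = (z : ℝ) / k}

/-- `β(k,m)`: the maximum, over subsets `F ⊆ P ∩ (1/k)ℤⁿ` with `|F| = m`, of
`min_{x ∈ conv F} ‖x‖₋P`. -/
noncomputable def betaKM {n : ℕ} (P : Set (EuclideanSpace ℝ (Fin n))) (k m : ℕ) : ℝ :=
  sSup {r : ℝ | ∃ F : Finset (EuclideanSpace ℝ (Fin n)),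
    (F : Set (EuclideanSpace ℝ (Fin n))) ⊆ P ∩ latticeDiv n k ∧ F.card = m ∧
    r = sInf (gaugeNeg P '' (convexHull ℝ (F : Set (EuclideanSpace ℝ (Fin n)))))}

/-!
The set of maximizers of a convex function on a convex set is an extreme subset, so it contains the
whole minimal face at each of its points. Take the function `‖·‖₋P` on `P = conv T`. As `x̂` is not
an extreme point, its minimal face is not a single point; as an extreme subset `B` of `conv T` lies
in `conv (T ∩ B)`, this face contains two points `v ≠ w` of `T`, hence the segment `[v, w]`, on
which `‖·‖₋P` is therefore constantly equal to its maximum. This lattice segment contains at least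
`k + 1` points of `(1/k)ℤⁿ`; any `m` of them form a set `F` with
`min_{conv F} ‖·‖₋P = max_P ‖·‖₋P`, the largest conceivable value.
-/

section OrderedSemiring

variable {𝕜 E : Type*} [Semiring 𝕜] [PartialOrder 𝕜] [AddCommMonoid E] [Module 𝕜 E]
  {A B T : Set E} {x : E}

lemma isExtreme_setOf_isMaxOn {β : Type*} [AddCommMonoid β] [LinearOrder β]
    [IsOrderedCancelAddMonoid β] [Module 𝕜 β] [PosSMulStrictMono 𝕜 β] {f : E → β}
    (hf : ConvexOn 𝕜 A f) : IsExtreme 𝕜 A {x ∈ A | IsMaxOn f A x} := by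
  refine ⟨Set.sep_subset _ _, fun a ha b hb z hz hzab ↦ ⟨ha, fun y hy ↦ ?_⟩⟩
  exact (hz.2 hy).trans (hf.le_left_of_right_le ha hb hzab (hz.2 hb))

lemma subset_convexHull_inter_of_isExtreme [ZeroLEOneClass 𝕜]
    (hB : IsExtreme 𝕜 (convexHull 𝕜 T) B) : B ⊆ convexHull 𝕜 (T ∩ B) := by
  let C : Set E := {y ∈ convexHull 𝕜 T | y ∈ B → y ∈ convexHull 𝕜 (T ∩ B)}
  have hTC : T ⊆ C := fun t ht ↦
    ⟨subset_convexHull 𝕜 T ht, fun htB ↦ subset_convexHull 𝕜 _ ⟨ht, htB⟩⟩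
  have hC : Convex 𝕜 C := by
    refine convex_iff_openSegment_subset.2 fun a ha b hb y hy ↦ ?_
    refine ⟨(convex_convexHull 𝕜 T).openSegment_subset ha.1 hb.1 hy, fun hyB ↦ ?_⟩
    have haB : a ∈ B := hB.left_mem_of_mem_openSegment ha.1 hb.1 hyB hy
    have hbB : b ∈ B := hB.right_mem_of_mem_openSegment ha.1 hb.1 hyB hy
    exact (convex_convexHull 𝕜 _).openSegment_subset (ha.2 haB) (hb.2 hbB) hy
  exact fun y hy ↦ (convexHull_min hTC hC (hB.subset hy)).2 hy

variable (𝕜) in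
/-- The minimal face of the convex set `A` at `x ∈ A`, i.e. the smallest extreme subset of `A`
containing `x`, encoded as the set of those `y ∈ A` from which the segment to `x` can be prolonged
beyond `x` within `A`. -/
def minimalFace (A : Set E) (x : E) : Set E :=
  {y ∈ A | ∃ z ∈ A, x ∈ openSegment 𝕜 y z}

lemma minimalFace_subset_of_isExtreme (hB : IsExtreme 𝕜 A B) (hx : x ∈ B) :
    minimalFace 𝕜 A x ⊆ B :=
  fun _ ⟨hy, _, hz, hxyz⟩ ↦ hB.left_mem_of_mem_openSegment hy hz hx hxyz

end OrderedSemiring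

section OrderedField

variable {𝕜 E : Type*} [Field 𝕜] [LinearOrder 𝕜] [IsStrictOrderedRing 𝕜] [AddCommGroup E]
  [Module 𝕜 E] {A B T : Set E} {x : E}

lemma mem_openSegment_iff_exists_eq_add_smul_sub {y z : E} :
    x ∈ openSegment 𝕜 y z ↔ ∃ ε : 𝕜, 0 < ε ∧ z = x + ε • (x - y) := by
  constructor
  · rintro ⟨a, b, ha, hb, hab, rfl⟩
    refine ⟨a / b, div_pos ha hb, ?_⟩
    obtain rfl : a = 1 - b := eq_sub_of_add_eq hab
    match_scalars <;> field
  · rintro ⟨ε, hε, rfl⟩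
    refine ⟨ε / (1 + ε), 1 / (1 + ε), by positivity, by positivity, by field, ?_⟩
    match_scalars <;> field

lemma isExtreme_minimalFace (hA : Convex 𝕜 A) : IsExtreme 𝕜 A (minimalFace 𝕜 A x) := by
  refine ⟨Set.sep_subset _ _, ?_⟩
  rintro a ha b hb _ ⟨-, z, hz, p, q, hp, hq, hpq, rfl⟩ ⟨s, t, hs, ht, hst, rfl⟩
  have hsum : p * t + q = 1 - p * s := by linear_combination hpq + p * hst
  have hpos : 0 < p * t + q := by positivity
  refine ⟨ha, (p * t / (p * t + q)) • b + (q / (p * t + q)) • z,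
    hA hb hz (by positivity) (by positivity) (by field), p * s, p * t + q, by positivity, hpos,
    by linear_combination hsum, ?_⟩
  match_scalars <;> field

lemma convex_minimalFace (hA : Convex 𝕜 A) (hx : x ∈ A) : Convex 𝕜 (minimalFace 𝕜 A x) := by
  have prolong_mono {y : E} {δ ε : 𝕜} (hδ : 0 < δ) (hδε : δ ≤ ε) (hy : x + ε • (x - y) ∈ A) :
      x + δ • (x - y) ∈ A := by
    have hε : 0 < ε := hδ.trans_le hδε
    have := hA.add_smul_mem hx hy (t := δ / ε) ⟨by positivity, (div_le_one hε).2 hδε⟩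
    rwa [smul_smul, div_mul_cancel₀ δ hε.ne'] at this
  rintro a ⟨ha, _, hza, hxa⟩ b ⟨hb, _, hzb, hxb⟩ s t hs ht hst
  obtain ⟨ε, hε, rfl⟩ := mem_openSegment_iff_exists_eq_add_smul_sub.1 hxa
  obtain ⟨η, hη, rfl⟩ := mem_openSegment_iff_exists_eq_add_smul_sub.1 hxb
  have hδ : 0 < min ε η := lt_min hε hη
  refine ⟨hA ha hb hs ht hst, _, ?_,
    mem_openSegment_iff_exists_eq_add_smul_sub.2 ⟨min ε η, hδ, rfl⟩⟩
  convert hA (prolong_mono hδ (min_le_left ε η) hza) (prolong_mono hδ (min_le_right ε η) hzb)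
    hs ht hst using 1
  obtain rfl : s = 1 - t := eq_sub_of_add_eq hst
  module

lemma minimalFace_nontrivial (hx : x ∈ A) (hne : x ∉ A.extremePoints 𝕜) :
    (minimalFace 𝕜 A x).Nontrivial := by
  simp only [mem_extremePoints_iff_left, not_and, not_forall] at hne
  obtain ⟨a, ha, b, hb, hxab, hax⟩ := hne hx
  refine ⟨a, ⟨ha, b, hb, hxab⟩, b, ⟨hb, a, ha, openSegment_symm 𝕜 a b ▸ hxab⟩, ?_⟩
  rintro rfl
  rw [openSegment_same] at hxab
  exact hax hxab.symm

lemma exists_segment_subset_of_isExtreme_convexHull (hB : IsExtreme 𝕜 (convexHull 𝕜 T) B)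
    (hx : x ∈ B) (hne : x ∉ (convexHull 𝕜 T).extremePoints 𝕜) :
    ∃ v ∈ T, ∃ w ∈ T, v ≠ w ∧ segment 𝕜 v w ⊆ B := by
  have hconv : Convex 𝕜 (convexHull 𝕜 T) := convex_convexHull 𝕜 T
  set F : Set E := minimalFace 𝕜 (convexHull 𝕜 T) x
  have hTF : (T ∩ F).Nontrivial := by
    by_contra h
    have hF : F ⊆ convexHull 𝕜 (T ∩ F) :=
      subset_convexHull_inter_of_isExtreme (isExtreme_minimalFace hconv)
    refine ((minimalFace_nontrivial (hB.subset hx) hne).mono hF).not_subsingleton ?_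
    obtain h | ⟨v, h⟩ := (Set.not_nontrivial_iff.1 h).eq_empty_or_singleton <;> simp [h]
  obtain ⟨v, ⟨hvT, hvF⟩, w, ⟨hwT, hwF⟩, hvw⟩ := hTF
  have hF : Convex 𝕜 F := convex_minimalFace hconv (hB.subset hx)
  exact ⟨v, hvT, w, hwT, hvw,
    (hF.segment_subset hvF hwF).trans (minimalFace_subset_of_isExtreme hB hx)⟩

end OrderedField

section Gauge

lemma convexOn_gauge {E : Type*} [AddCommGroup E] [Module ℝ E] {s : Set E} (hs : Convex ℝ s)
    (habs : Absorbent ℝ s) : ConvexOn ℝ Set.univ (gauge s) := by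
  refine ⟨convex_univ, fun x _ y _ a b ha hb _ ↦ (gauge_add_le hs habs _ _).trans_eq ?_⟩
  rw [gauge_smul_of_nonneg ha, gauge_smul_of_nonneg hb]

variable {n : ℕ} {P : Set (EuclideanSpace ℝ (Fin n))}

lemma gaugeNeg_nonneg (x : EuclideanSpace ℝ (Fin n)) : 0 ≤ gaugeNeg P x :=
  Real.sInf_nonneg fun _ ht ↦ ht.1

lemma gaugeNeg_eq_gauge (h0 : 0 ∈ P) : gaugeNeg P = gauge (-P) := by
  have hne : (-P).Nonempty := ⟨0, by simpa using h0⟩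
  ext x
  obtain rfl | hx := eq_or_ne x 0
  · rw [gauge_zero]
    refine le_antisymm (csInf_le ⟨0, fun t ht ↦ ht.1⟩ ⟨le_rfl, ?_⟩) (gaugeNeg_nonneg 0)
    simp [Set.zero_smul_set hne]
  · rw [gaugeNeg, gauge_def]
    congrm sInf {t | ?_}
    refine and_congr_left fun hxt ↦ ⟨fun ht ↦ lt_of_le_of_ne ht ?_, fun ht : 0 < t ↦ ht.le⟩
    rintro rfl
    exact hx (by simpa [Set.zero_smul_set hne] using hxt)

lemma convexOn_gaugeNeg (hP : Convex ℝ P) (h0 : 0 ∈ interior P) : ConvexOn ℝ P (gaugeNeg P) := by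
  have habs : Absorbent ℝ (-P) :=
    absorbent_nhds_zero (neg_mem_nhds_zero _ (mem_interior_iff_mem_nhds.1 h0))
  rw [gaugeNeg_eq_gauge (interior_subset h0)]
  exact (convexOn_gauge hP.neg habs).subset (Set.subset_univ P) hP

end Gauge

section LatticePoints

variable {n k : ℕ}

lemma finite_inter_latticeDiv {P : Set (EuclideanSpace ℝ (Fin n))} (hP : Bornology.IsBounded P)
    (hk : k ≠ 0) : (P ∩ latticeDiv n k).Finite := by
  obtain ⟨R, hR⟩ := hP.exists_norm_le
  let S : Set ℝ := (fun z : ℤ ↦ (z : ℝ) / k) '' Set.Icc (-⌊R * k⌋) ⌊R * k⌋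
  have hS : (Set.univ.pi fun _ : Fin n ↦ S).Finite :=
    Set.Finite.pi fun _ ↦ (Set.finite_Icc _ _).image _
  refine (hS.preimage (WithLp.ofLp_injective 2).injOn).subset fun x ⟨hxP, hxL⟩ i _ ↦ ?_
  obtain ⟨z, hz⟩ := hxL i
  refine ⟨z, abs_le.1 (Int.le_floor.2 ?_), hz.symm⟩
  have hxi : |x i| ≤ R := (PiLp.norm_apply_le x i).trans (hR x hxP)
  have hk' : (0 : ℝ) < k := by positivity
  rw [hz, abs_div, abs_of_pos hk', div_le_iff₀ hk', ← Int.cast_abs] at hxi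
  exact hxi

variable {v w : EuclideanSpace ℝ (Fin n)}

lemma lineMap_div_mem_latticeDiv (hk : k ≠ 0) (hv : IsLatticePt v) (hw : IsLatticePt w) (j : ℤ) :
    AffineMap.lineMap v w ((j : ℝ) / k) ∈ latticeDiv n k := by
  intro i
  obtain ⟨a, ha⟩ := hv i
  obtain ⟨b, hb⟩ := hw i
  refine ⟨j * (b - a) + k * a, ?_⟩
  simp only [AffineMap.lineMap_apply_module', PiLp.add_apply, PiLp.smul_apply, PiLp.sub_apply,
    ha, hb, smul_eq_mul]
  push_cast
  field

lemma exists_finset_subset_segment_inter_latticeDiv (hk : k ≠ 0) (hv : IsLatticePt v)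
    (hw : IsLatticePt w) (hvw : v ≠ w) {m : ℕ} (hm : m ≤ k + 1) :
    ∃ F : Finset (EuclideanSpace ℝ (Fin n)),
      (F : Set (EuclideanSpace ℝ (Fin n))) ⊆ segment ℝ v w ∩ latticeDiv n k ∧ F.card = m := by
  have hk' : (0 : ℝ) < k := by positivity
  let φ : ℕ ↪ EuclideanSpace ℝ (Fin n) :=
    ⟨fun j ↦ AffineMap.lineMap v w ((j : ℝ) / k), (AffineMap.lineMap_injective ℝ hvw).comp
      (fun _ _ h ↦ Nat.cast_injective ((div_left_inj' hk'.ne').1 h))⟩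
  refine ⟨(Finset.range m).map φ, fun y hy ↦ ?_, by simp⟩
  obtain ⟨j, hj, rfl⟩ := Finset.mem_map.1 (Finset.mem_coe.1 hy)
  have hjk : j ≤ k := Nat.le_of_lt_succ ((Finset.mem_range.1 hj).trans_le hm)
  refine ⟨lineMap_mem_segment ℝ v w ⟨by positivity, ?_⟩,
    lineMap_div_mem_latticeDiv hk hv hw j⟩
  exact (div_le_one hk').2 (by exact_mod_cast hjk)

end LatticePoints

lemma betaKM_card_eq_of_forall_convexHull {n k : ℕ} {P : Set (EuclideanSpace ℝ (Fin n))} {M : ℝ}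
    (hM : ∀ y ∈ P, gaugeNeg P y ≤ M) {F : Finset (EuclideanSpace ℝ (Fin n))} (hF : F.Nonempty)
    (hFP : (F : Set (EuclideanSpace ℝ (Fin n))) ⊆ P ∩ latticeDiv n k)
    (hFM : ∀ y ∈ convexHull ℝ (F : Set (EuclideanSpace ℝ (Fin n))), gaugeNeg P y = M) :
    betaKM P k F.card = M := by
  refine IsGreatest.csSup_eq ⟨⟨F, hFP, rfl, ?_⟩, ?_⟩
  · have hne : (convexHull ℝ (F : Set (EuclideanSpace ℝ (Fin n)))).Nonempty :=
      convexHull_nonempty_iff.2 hF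
    rw [Set.image_congr hFM, hne.image_const, csInf_singleton]
  · rintro _ ⟨G, hGP, hGF, rfl⟩
    obtain ⟨y, hy⟩ : G.Nonempty := Finset.card_pos.1 (hGF ▸ hF.card_pos)
    have hbdd : BddBelow (gaugeNeg P '' convexHull ℝ (G : Set (EuclideanSpace ℝ (Fin n)))) :=
      ⟨0, Set.forall_mem_image.2 fun z _ ↦ gaugeNeg_nonneg z⟩
    exact (csInf_le hbdd (Set.mem_image_of_mem _ (subset_convexHull ℝ _ hy))).trans
      (hM y (hGP hy).1)

/-- cf. Theorem 1.6 of the paper, case where (∗_P) fails. If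
`‖·‖₋P` attains its maximum over `P` at some non-extreme point of `P`, then for
every `m ≥ 1` and all sufficiently large `k`, `|P ∩ (1/k)ℤⁿ| ≥ m` and
`β(k,m) = max_P ‖·‖₋P`. -/
theorem betaKM_eq_max_of_not_starP
    (n : ℕ) (T : Finset (EuclideanSpace ℝ (Fin n))) (hT : ∀ x ∈ T, IsLatticePt x)
    (P : Set (EuclideanSpace ℝ (Fin n)))
    (hP : P = convexHull ℝ (T : Set (EuclideanSpace ℝ (Fin n))))
    (h0 : (0 : EuclideanSpace ℝ (Fin n)) ∈ interior P)
    (xhat : EuclideanSpace ℝ (Fin n)) (hxP : xhat ∈ P)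
    (hxne : xhat ∉ P.extremePoints ℝ)
    (hxmax : ∀ y ∈ P, gaugeNeg P y ≤ gaugeNeg P xhat)
    (m : ℕ) (hm : 0 < m) :
    ∃ k₀ : ℕ, ∀ k ≥ k₀, m ≤ (P ∩ latticeDiv n k).ncard ∧
      betaKM P k m = sSup (gaugeNeg P '' P) := by
  subst hP
  set P := convexHull ℝ (T : Set (EuclideanSpace ℝ (Fin n)))
  have hconv : Convex ℝ P := convex_convexHull ℝ _
  have hbdd : Bornology.IsBounded P := isBounded_convexHull.2 T.finite_toSet.isBounded
  have hsup : sSup (gaugeNeg P '' P) = gaugeNeg P xhat :=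
    IsGreatest.csSup_eq ⟨Set.mem_image_of_mem _ hxP, Set.forall_mem_image.2 hxmax⟩
  obtain ⟨v, hv, w, hw, hvw, hmax⟩ := exists_segment_subset_of_isExtreme_convexHull
    (isExtreme_setOf_isMaxOn (convexOn_gaugeNeg hconv h0)) ⟨hxP, hxmax⟩ hxne
  refine ⟨m, fun k hk ↦ ?_⟩
  have hk0 : k ≠ 0 := (hm.trans_le hk).ne'
  obtain ⟨F, hF, rfl⟩ := exists_finset_subset_segment_inter_latticeDiv hk0 (hT v hv) (hT w hw) hvw
    (Nat.le_succ_of_le hk)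
  have hFP : (F : Set (EuclideanSpace ℝ (Fin n))) ⊆ P ∩ latticeDiv n k :=
    fun y hy ↦ ⟨(hmax (hF hy).1).1, (hF hy).2⟩
  have hFmax : ∀ y ∈ convexHull ℝ (F : Set _), gaugeNeg P y = gaugeNeg P xhat := fun y hy ↦
    have hy' := hmax (convexHull_min (fun z hz ↦ (hF hz).1) (convex_segment v w) hy)
    (hxmax y hy'.1).antisymm (hy'.2 hxP)
  refine ⟨?_, hsup ▸ betaKM_card_eq_of_forall_convexHull hxmax (Finset.card_pos.1 hm) hFP hFmax⟩
  rw [← Set.ncard_coe_finset]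
  exact Set.ncard_le_ncard hFP (finite_inter_latticeDiv hbdd hk0)
end

section
/- Let v₁,…,v_d ∈ ℤⁿ and let P := {y ∈ ℝⁿ : ⟨y, v_i⟩ ≥ −1 for all i = 1,…,d}; assume P is compact and that every extreme point of P lies in ℤⁿ. Then max_{x∈P} ‖x‖_{−P} ≥ 1, with equality if and only if P = −P; moreover, if P ≠ −P then max_{x∈P} ‖x‖_{−P} ≥ 2. -/
open scoped RealInnerProductSpace Pointwise

/-! For the lower bound, a point `x` of maximal norm in `P` lies in no `t • (-P)` with `t < 1`, as
`-t⁻¹ • x` would be a longer point of `P`. For the gap between `1` and `2`, each functional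
`⟨·, vᵢ⟩` is dominated by the gauge of `-P` and is integral at the extreme points of `P`. If that
gauge is `< 2` on `P`, these integers are therefore `≤ 1`, so the extreme points, and by
Krein–Milman all of `P`, lie in `-P`. -/

open scoped Topology

section Gauge

variable {E : Type*}

section TopologicalVectorSpace

variable [AddCommGroup E] [Module ℝ E] [TopologicalSpace E] [IsTopologicalAddGroup E]
  [ContinuousSMul ℝ E] {C K : Set E}

theorem bddAbove_gauge_image (hK : IsCompact K) (hconv : Convex ℝ C) (h₀ : C ∈ 𝓝 0) :
    BddAbove (gauge C '' K) :=
  hK.bddAbove_image (continuous_gauge hconv h₀).continuousOn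

theorem sSup_gauge_image_le_one_iff (hK : IsCompact K) (hKne : K.Nonempty) (hC : IsClosed C)
    (hconv : Convex ℝ C) (h₀ : C ∈ 𝓝 0) : sSup (gauge C '' K) ≤ 1 ↔ K ⊆ C := by
  rw [csSup_le_iff (bddAbove_gauge_image hK hconv h₀) (hKne.image _), Set.forall_mem_image]
  simp only [gauge_le_one_iff_mem_closure hconv h₀, hC.closure_eq, Set.subset_def]

theorem subset_of_extremePoints_subset [T2Space E] [LocallyConvexSpace ℝ E] (hK : IsCompact K)
    (hKconv : Convex ℝ K) (hC : IsClosed C) (hCconv : Convex ℝ C)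
    (hext : K.extremePoints ℝ ⊆ C) : K ⊆ C := by
  rw [← closure_convexHull_extremePoints hK hKconv]
  exact closure_minimal (convexHull_min hext hCconv) hC

end TopologicalVectorSpace

theorem exists_mem_one_le_gauge_neg [NormedAddCommGroup E] [NormedSpace ℝ E] [Nontrivial E]
    {K : Set E} (hK : IsCompact K) (h₀ : K ∈ 𝓝 0) : ∃ x ∈ K, 1 ≤ gauge (-K) x := by
  obtain ⟨x, hxK, hmax⟩ := hK.exists_isMaxOn ⟨0, mem_of_mem_nhds h₀⟩ continuous_norm.continuousOn
  refine ⟨x, hxK, ?_⟩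
  by_contra! hlt
  have habs : Absorbent ℝ (-K) := absorbent_nhds_zero (neg_mem_nhds_zero E h₀)
  obtain ⟨t, ht₀, ht₁, y, hy, rfl⟩ := exists_lt_of_gauge_lt habs hlt
  have hnorm_le : ∀ z ∈ K, ‖z‖ ≤ t * ‖y‖ := fun z hz ↦ by
    simpa only [norm_smul, Real.norm_of_nonneg ht₀.le] using isMaxOn_iff.1 hmax z hz
  have hy₀ : ‖y‖ = 0 := by
    have := norm_neg y ▸ hnorm_le (-y) hy
    nlinarith [norm_nonneg y]
  have hK₀ : K ⊆ {0} := fun z hz ↦ norm_le_zero_iff.1 <| by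
    simpa only [hy₀, mul_zero] using hnorm_le z hz
  exact infinite_of_mem_nhds 0 h₀ ((Set.finite_singleton 0).subset hK₀)

theorem one_le_sSup_gauge_neg_image [NormedAddCommGroup E] [NormedSpace ℝ E] [Nontrivial E]
    {K : Set E} (hK : IsCompact K) (hconv : Convex ℝ K) (h₀ : K ∈ 𝓝 0) :
    1 ≤ sSup (gauge (-K) '' K) :=
  have ⟨x, hxK, hx⟩ := exists_mem_one_le_gauge_neg hK h₀
  le_csSup_of_le (bddAbove_gauge_image hK hconv.neg (neg_mem_nhds_zero E h₀)) ⟨x, hxK, rfl⟩ hx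

end Gauge

theorem subset_neg_iff_eq_neg {G : Type*} [InvolutiveNeg G] {s : Set G} : s ⊆ -s ↔ s = -s :=
  ⟨fun h ↦ h.antisymm (Set.neg_subset.2 h), Eq.subset⟩

section OneSidedPolar

variable {E ι : Type*}

section Module

variable [AddCommGroup E] [Module ℝ E] {f : ι → Module.Dual ℝ E}

/-- The convex body `{y | ∀ i, -1 ≤ f i y}` cut out by a family `f` of linear functionals. The sign
convention is that of toric geometry, making it the one-sided polar of the family `-f`; with
`f i = ⟨·, vᵢ⟩` it is the polytope of the toric variety whose fan has rays `vᵢ`. -/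
def oneSidedPolar (f : ι → Module.Dual ℝ E) : Set E :=
  {y | ∀ i, -1 ≤ f i y}

theorem mem_neg_oneSidedPolar {x : E} : x ∈ -oneSidedPolar f ↔ ∀ i, f i x ≤ 1 := by
  simp only [oneSidedPolar, Set.mem_neg, Set.mem_ofPred_eq, map_neg, neg_le_neg_iff]

theorem convex_oneSidedPolar (f : ι → Module.Dual ℝ E) : Convex ℝ (oneSidedPolar f) := by
  simpa only [oneSidedPolar, Set.ofPred_forall] using
    convex_iInter fun i ↦ convex_halfSpace_ge (f i).isLinear (-1)

theorem oneSidedPolar_mem_nhds_zero [Finite ι] [TopologicalSpace E]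
    (hf : ∀ i, Continuous (f i)) : oneSidedPolar f ∈ 𝓝 0 :=
  Filter.eventually_all.2 fun i ↦ (hf i).continuousAt.eventually_const_le (by simp)

theorem apply_le_gauge_neg_oneSidedPolar (habs : Absorbent ℝ (-oneSidedPolar f)) (i : ι) (x : E) :
    f i x ≤ gauge (-oneSidedPolar f) x := by
  refine le_of_forall_gt fun a ha ↦ ?_
  obtain ⟨t, ht₀, hta, y, hy, rfl⟩ := exists_lt_of_gauge_lt habs ha
  calc f i (t • y) = t * f i y := by rw [map_smul, smul_eq_mul]
    _ ≤ t := mul_le_of_le_one_right ht₀.le (mem_neg_oneSidedPolar.1 hy i)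
    _ < a := hta

theorem mem_neg_oneSidedPolar_of_gauge_lt_two (habs : Absorbent ℝ (-oneSidedPolar f)) {u : E}
    (hint : ∀ i, ∃ m : ℤ, f i u = m) (hu : gauge (-oneSidedPolar f) u < 2) :
    u ∈ -oneSidedPolar f := by
  refine mem_neg_oneSidedPolar.2 fun i ↦ ?_
  obtain ⟨m, hm⟩ := hint i
  have hlt : (m : ℝ) < 2 := hm ▸ (apply_le_gauge_neg_oneSidedPolar habs i u).trans_lt hu
  have hle : m ≤ 1 := Int.lt_add_one_iff.1 (by exact_mod_cast hlt)
  rw [hm]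
  exact_mod_cast hle

end Module

variable [NormedAddCommGroup E] [NormedSpace ℝ E] {f : ι → Module.Dual ℝ E}

theorem oneSidedPolar_eq_neg_of_sSup_gauge_neg_lt_two (hc : IsCompact (oneSidedPolar f))
    (h₀ : oneSidedPolar f ∈ 𝓝 0)
    (hint : ∀ u ∈ (oneSidedPolar f).extremePoints ℝ, ∀ i, ∃ m : ℤ, f i u = m)
    (hlt : sSup (gauge (-oneSidedPolar f) '' oneSidedPolar f) < 2) :
    oneSidedPolar f = -oneSidedPolar f := by
  have hconv := convex_oneSidedPolar f
  have h₀neg := neg_mem_nhds_zero E h₀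
  have hgauge : ∀ u ∈ oneSidedPolar f, gauge (-oneSidedPolar f) u < 2 := fun u hu ↦
    (le_csSup (bddAbove_gauge_image hc hconv.neg h₀neg) ⟨u, hu, rfl⟩).trans_lt hlt
  exact subset_neg_iff_eq_neg.1 <|
    subset_of_extremePoints_subset hc hconv hc.neg.isClosed hconv.neg fun u hu ↦
      mem_neg_oneSidedPolar_of_gauge_lt_two (absorbent_nhds_zero h₀neg) (hint u hu) (hgauge u hu.1)

theorem max_gaugeNeg_ge_one_general [Nontrivial E] {P : Set E} (hP : P = oneSidedPolar f)
    (hPc : IsCompact P) (hP₀ : P ∈ 𝓝 0)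
    (hint : ∀ u ∈ P.extremePoints ℝ, ∀ i, ∃ m : ℤ, f i u = m) :
    1 ≤ sSup (gauge (-P) '' P) ∧
    (sSup (gauge (-P) '' P) = 1 ↔ P = -P) ∧
    (P ≠ -P → 2 ≤ sSup (gauge (-P) '' P)) := by
  subst hP
  have hconv := convex_oneSidedPolar f
  have hge := one_le_sSup_gauge_neg_image hPc hconv hP₀
  have hle := sSup_gauge_image_le_one_iff hPc ⟨0, mem_of_mem_nhds hP₀⟩ hPc.neg.isClosed hconv.neg
    (neg_mem_nhds_zero E hP₀)
  refine ⟨hge, ?_, fun hne ↦ ?_⟩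
  · rw [← subset_neg_iff_eq_neg, ← hle, hge.ge_iff_eq']
  · contrapose! hne
    exact oneSidedPolar_eq_neg_of_sSup_gauge_neg_lt_two hPc hP₀ hint hne

end OneSidedPolar

-- `gauge` only admits scalars `t > 0`; allowing `t = 0` could matter only at `x = 0`.
theorem gaugeNeg_eq_gauge_neg {n : ℕ} (P : Set (EuclideanSpace ℝ (Fin n))) :
    gaugeNeg P = gauge (-P) := by
  funext x
  rcases eq_or_ne x 0 with rfl | hx
  · rw [gauge_zero, gaugeNeg]
    rcases P.eq_empty_or_nonempty with rfl | hP
    · simp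
    · exact IsLeast.csInf_eq ⟨⟨le_rfl, by simp [Set.zero_smul_set hP.neg]⟩, fun t ht ↦ ht.1⟩
  · rw [gaugeNeg, gauge_def]
    congr! 3 with t
    refine and_congr_left fun hxt ↦ ⟨fun ht ↦ ht.lt_of_ne ?_, fun ht ↦ le_of_lt ht⟩
    rintro rfl
    exact hx (Set.zero_smul_set_subset _ hxt)

theorem IsLatticePt.exists_int_inner_eq {n : ℕ} {x y : EuclideanSpace ℝ (Fin n)}
    (hx : IsLatticePt x) (hy : IsLatticePt y) : ∃ m : ℤ, ⟪x, y⟫ = m := by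
  choose a ha using hx
  choose b hb using hy
  exact ⟨∑ i, b i * a i, by simp [PiLp.inner_apply, ha, hb]⟩

/-- the convex content of Lemma 8.6 of the paper. For the compact
lattice polytope `P = {y : ⟨y, vᵢ⟩ ≥ −1 ∀ i}` with integral extreme points:
`max_P ‖·‖₋P ≥ 1`, with equality iff `P = −P`; and if `P ≠ −P` then
`max_P ‖·‖₋P ≥ 2`. -/
theorem max_gaugeNeg_ge_one
    (n d : ℕ) (hn : 0 < n) (v : Fin d → EuclideanSpace ℝ (Fin n))
    (hv : ∀ i, IsLatticePt (v i))
    (P : Set (EuclideanSpace ℝ (Fin n)))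
    (hP : P = {y | ∀ i, -1 ≤ ⟪y, v i⟫}) (hPc : IsCompact P)
    (hext : ∀ u ∈ P.extremePoints ℝ, IsLatticePt u) :
    1 ≤ sSup (gaugeNeg P '' P) ∧
    (sSup (gaugeNeg P '' P) = 1 ↔ P = -P) ∧
    (P ≠ -P → 2 ≤ sSup (gaugeNeg P '' P)) := by
  have : NeZero n := ⟨hn.ne'⟩
  have hP' : P = oneSidedPolar fun i ↦ (innerₗ _).flip (v i) := hP
  rw [gaugeNeg_eq_gauge_neg]
  refine max_gaugeNeg_ge_one_general hP' hPc ?_ fun u hu i ↦ (hext u hu).exists_int_inner_eq (hv i)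
  exact hP' ▸ oneSidedPolar_mem_nhds_zero fun i ↦ LinearMap.continuous_of_finiteDimensional _
end
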